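/- Let p > 2, let N ≥ 1 be an integer, and let f ∈ C^1([0,∞)) satisfy (f0), (f1), (f2), (f3). Then there exists a nonconstant radial profile solution u of the Neumann problem −Δ_p u + u^{p−1} = f(u) in the unit ball of ℝ^N; that is, there exists u ∈ C^1([0,1]) with u(r) > 0 for all r ∈ [0,1], u nondecreasing on [0,1], u not constant, u'(0) = u'(1) = 0, and such that the map r ↦ r^{N−1}|u'(r)|^{p−2}u'(r) is differentiable on (0,1) with derivative equal to r^{N−1}(u(r)^{p−1} − f(u(r))) for every r ∈ (0,1). -/

import Mathlib

open Real Filter Set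

/-- The "flux" `s ↦ s^(N-1) |u'(s)|^(p-2) u'(s)` appearing in the radial form of the
`p`-Laplacian. -/
noncomputable def flux (p : ℝ) (N : ℕ) (u' : ℝ → ℝ) (s : ℝ) : ℝ :=
  s ^ (N - 1) * (|u' s| ^ (p - 2) * u' s)

/-- `u ∈ C^1([0,1])` (with derivative `u'`) is a radial profile solution of the Neumann
problem `-Δ_p u + u^(p-1) = f(u)` in the unit ball of `ℝ^N`. -/
def IsRadialNeumannSolution (p : ℝ) (N : ℕ) (f : ℝ → ℝ) (u u' : ℝ → ℝ) : Prop :=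
  (∀ r ∈ Set.Icc (0:ℝ) 1, HasDerivWithinAt u (u' r) (Set.Icc 0 1) r) ∧
  ContinuousOn u' (Set.Icc 0 1) ∧
  u' 0 = 0 ∧ u' 1 = 0 ∧
  ∀ r ∈ Set.Ioo (0:ℝ) 1,
    HasDerivAt (flux p N u') (r ^ (N - 1) * ((u r) ^ (p - 1) - f (u r))) r


section aux
open MeasureTheory intervalIntegral Topology

noncomputable def psi (q C ε y : ℝ) : ℝ := (min (max y 0) C + ε) ^ q - ε ^ q

noncomputable def rho (N : ℕ) (ε r : ℝ) : ℝ := r ^ (N - 1) + ε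

structure Sol (q C : ℝ) (N : ℕ) (g : ℝ → ℝ) (ε : ℝ) (u w : ℝ → ℝ) : Prop where
  cu : Continuous u
  cw : Continuous w
  hu : ∀ t ∈ Icc (0:ℝ) 1, u t = u 0 + ∫ r in (0:ℝ)..t, psi q C ε (w r / rho N ε r)
  hw : ∀ t ∈ Icc (0:ℝ) 1, w t = ∫ r in (0:ℝ)..t, rho N ε r * g (u r)

lemma psi_cont {q : ℝ} (hq : 0 < q) (C : ℝ) : Continuous (fun x : ℝ × ℝ => psi q C x.1 x.2) := by
  unfold psi
  have h := Real.continuous_rpow_const hq.le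
  exact (h.comp (by fun_prop)).sub (h.comp (by fun_prop))

lemma psi_nonneg {q C ε : ℝ} (hq : 0 < q) (hC : 0 ≤ C) (hε : 0 ≤ ε) (y : ℝ) :
    0 ≤ psi q C ε y := by
  unfold psi
  have h1 : 0 ≤ min (max y 0) C := le_min (le_max_right _ _) hC
  have := Real.rpow_le_rpow hε (by linarith : ε ≤ min (max y 0) C + ε) hq.le
  linarith

lemma psi_le {q C ε : ℝ} (hq : 0 < q) (hC : 0 ≤ C) (hε : 0 ≤ ε) (hε1 : ε ≤ 1) (y : ℝ) :
    psi q C ε y ≤ (C + 1) ^ q := by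
  unfold psi
  have h1 : 0 ≤ min (max y 0) C := le_min (le_max_right _ _) hC
  have h2 : min (max y 0) C ≤ C := min_le_right _ _
  have := Real.rpow_le_rpow (by linarith) (by linarith : min (max y 0) C + ε ≤ C + 1) hq.le
  have := Real.rpow_nonneg hε q
  linarith

lemma psi_zero {q C : ℝ} (hq : 0 < q) (y : ℝ) :
    psi q C 0 y = (min (max y 0) C) ^ q := by
  simp [psi, Real.zero_rpow hq.ne']

lemma psi_of_nonpos {q C ε : ℝ} (hC : 0 ≤ C) {y : ℝ} (hy : y ≤ 0) :
    psi q C ε y = 0 := by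
  simp [psi, max_eq_right hy, min_eq_left hC]

lemma rho_cont (N : ℕ) (ε : ℝ) : Continuous (rho N ε) := by unfold rho; fun_prop

lemma rho_nonneg (N : ℕ) {ε r : ℝ} (hε : 0 ≤ ε) (hr : 0 ≤ r) : 0 ≤ rho N ε r := by
  unfold rho; positivity

lemma rho_pos (N : ℕ) {ε r : ℝ} (hε : 0 ≤ ε) (hr : 0 < r) : 0 < rho N ε r := by
  unfold rho; positivity

lemma rho_mono (N : ℕ) (ε : ℝ) {r s : ℝ} (hr : 0 ≤ r) (h : r ≤ s) : rho N ε r ≤ rho N ε s := by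
  unfold rho; gcongr

lemma rho_le (N : ℕ) (ε : ℝ) {r : ℝ} (hr : 0 ≤ r) (h : r ≤ 1) : rho N ε r ≤ 1 + ε := by
  unfold rho
  have := pow_le_one₀ hr h (n := N - 1)
  linarith

lemma rho_int_pos (N : ℕ) {ε s t : ℝ} (hε : 0 ≤ ε) (hs : 0 ≤ s) (h : s < t) :
    0 < ∫ r in s..t, rho N ε r :=
  intervalIntegral_pos_of_pos_on ((rho_cont N ε).intervalIntegrable _ _)
    (fun r hr => rho_pos N hε (hs.trans_lt hr.1)) h

namespace Sol
variable {q C : ℝ} {N : ℕ} {g : ℝ → ℝ} {ε : ℝ} {u w : ℝ → ℝ}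

lemma int_psi (h : Sol q C N g ε u w) (hq : 0 < q) (hC : 0 ≤ C) (hε : 0 ≤ ε) (hε1 : ε ≤ 1)
    (s t : ℝ) : IntervalIntegrable (fun r => psi q C ε (w r / rho N ε r)) volume s t := by
  have hm : Measurable (fun r => psi q C ε (w r / rho N ε r)) := by
    have h1 : Measurable (fun r => w r / rho N ε r) :=
      h.cw.measurable.div (rho_cont N ε).measurable
    have h2 : Continuous (fun y => psi q C ε y) :=
      (psi_cont hq C).comp (by fun_prop : Continuous fun y : ℝ => (ε, y))
    exact h2.measurable.comp h1
  refine (intervalIntegrable_const (c := (C + 1) ^ q)).mono_fun' hm.aestronglyMeasurable ?_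
  refine Filter.Eventually.of_forall fun r => ?_
  simp only [Real.norm_eq_abs]
  rw [abs_of_nonneg (psi_nonneg hq hC hε _)]
  exact psi_le hq hC hε hε1 _

lemma int_w (h : Sol q C N g ε u w) (hg : Continuous g) (s t : ℝ) :
    IntervalIntegrable (fun r => rho N ε r * g (u r)) volume s t :=
  ((rho_cont N ε).mul (hg.comp h.cu)).intervalIntegrable _ _

lemma u_sub (h : Sol q C N g ε u w) (hq : 0 < q) (hC : 0 ≤ C) (hε : 0 ≤ ε) (hε1 : ε ≤ 1)
    {s t : ℝ} (hs : s ∈ Icc (0:ℝ) 1) (ht : t ∈ Icc (0:ℝ) 1) :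
    u t - u s = ∫ r in s..t, psi q C ε (w r / rho N ε r) := by
  rw [h.hu t ht, h.hu s hs, ← integral_interval_sub_left (h.int_psi hq hC hε hε1 0 t)
    (h.int_psi hq hC hε hε1 0 s)]
  ring

lemma w_sub (h : Sol q C N g ε u w) (hg : Continuous g)
    {s t : ℝ} (hs : s ∈ Icc (0:ℝ) 1) (ht : t ∈ Icc (0:ℝ) 1) :
    w t - w s = ∫ r in s..t, rho N ε r * g (u r) := by
  rw [h.hw t ht, h.hw s hs, ← integral_interval_sub_left (h.int_w hg 0 t)
    (h.int_w hg 0 s)]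

lemma w_zero (h : Sol q C N g ε u w) : w 0 = 0 := by
  rw [h.hw 0 (by simp)]; simp

lemma u_ge (h : Sol q C N g ε u w) (hq : 0 < q) (hC : 0 ≤ C) (hε : 0 ≤ ε) (hε1 : ε ≤ 1)
    {s t c : ℝ} (hs : 0 ≤ s) (hst : s ≤ t) (ht : t ≤ 1)
    (hb : ∀ r ∈ Ioo s t, c ≤ psi q C ε (w r / rho N ε r)) : c * (t - s) ≤ u t - u s := by
  rw [h.u_sub hq hC hε hε1 ⟨hs, hst.trans ht⟩ ⟨hs.trans hst, ht⟩]
  have := integral_mono_on_of_le_Ioo hst (intervalIntegrable_const (c := c) (μ := volume))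
    (h.int_psi hq hC hε hε1 s t) hb
  simp at this; linarith

lemma u_le (h : Sol q C N g ε u w) (hq : 0 < q) (hC : 0 ≤ C) (hε : 0 ≤ ε) (hε1 : ε ≤ 1)
    {s t c : ℝ} (hs : 0 ≤ s) (hst : s ≤ t) (ht : t ≤ 1)
    (hb : ∀ r ∈ Ioo s t, psi q C ε (w r / rho N ε r) ≤ c) : u t - u s ≤ c * (t - s) := by
  rw [h.u_sub hq hC hε hε1 ⟨hs, hst.trans ht⟩ ⟨hs.trans hst, ht⟩]
  have := integral_mono_on_of_le_Ioo hst (h.int_psi hq hC hε hε1 s t)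
    (intervalIntegrable_const (c := c) (μ := volume)) hb
  simp at this; linarith

lemma w_ge (h : Sol q C N g ε u w) (hg : Continuous g) (hε : 0 ≤ ε)
    {s t c : ℝ} (hs : 0 ≤ s) (hst : s ≤ t) (ht : t ≤ 1)
    (hb : ∀ r ∈ Ioo s t, c ≤ g (u r)) : c * (∫ r in s..t, rho N ε r) ≤ w t - w s := by
  rw [h.w_sub hg ⟨hs, hst.trans ht⟩ ⟨hs.trans hst, ht⟩, ← intervalIntegral.integral_const_mul]
  refine integral_mono_on_of_le_Ioo hst
    (((rho_cont N ε).intervalIntegrable _ _).const_mul c) (h.int_w hg s t) fun r hr => ?_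
  rw [mul_comm]
  exact mul_le_mul_of_nonneg_left (hb r hr) (rho_nonneg N hε (hs.trans hr.1.le))

lemma w_le (h : Sol q C N g ε u w) (hg : Continuous g) (hε : 0 ≤ ε)
    {s t c : ℝ} (hs : 0 ≤ s) (hst : s ≤ t) (ht : t ≤ 1)
    (hb : ∀ r ∈ Ioo s t, g (u r) ≤ c) : w t - w s ≤ c * (∫ r in s..t, rho N ε r) := by
  rw [h.w_sub hg ⟨hs, hst.trans ht⟩ ⟨hs.trans hst, ht⟩, ← intervalIntegral.integral_const_mul]
  refine integral_mono_on_of_le_Ioo hst (h.int_w hg s t)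
    (((rho_cont N ε).intervalIntegrable _ _).const_mul c) fun r hr => ?_
  rw [mul_comm c]
  exact mul_le_mul_of_nonneg_left (hb r hr) (rho_nonneg N hε (hs.trans hr.1.le))

lemma mono (h : Sol q C N g ε u w) (hq : 0 < q) (hC : 0 ≤ C) (hε : 0 ≤ ε) (hε1 : ε ≤ 1)
    {s t : ℝ} (hs : 0 ≤ s) (hst : s ≤ t) (ht : t ≤ 1) : u s ≤ u t := by
  have := h.u_ge hq hC hε hε1 (c := 0) hs hst ht (fun r _ => psi_nonneg hq hC hε _)
  linarith

/-- upper bound of the normalized flux -/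
lemma flux_le (h : Sol q C N g ε u w) (hg : Continuous g) (hε : 0 ≤ ε)
    {t c : ℝ} (hc : 0 ≤ c) (hs : 0 < t) (ht : t ≤ 1)
    (hb : ∀ r ∈ Ioo 0 t, g (u r) ≤ c) : w t / rho N ε t ≤ c * t := by
  have h1 := h.w_le hg hε le_rfl hs.le ht hb
  rw [h.w_zero, sub_zero] at h1
  have h2 : (∫ r in (0:ℝ)..t, rho N ε r) ≤ ∫ r in (0:ℝ)..t, rho N ε t :=
    integral_mono_on hs.le ((rho_cont N ε).intervalIntegrable _ _)
      (intervalIntegrable_const (μ := volume)) fun r hr => rho_mono N ε hr.1 hr.2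
  simp at h2
  rw [div_le_iff₀ (rho_pos N hε hs)]
  calc w t ≤ c * (∫ r in (0:ℝ)..t, rho N ε r) := h1
    _ ≤ c * (t * rho N ε t) := by gcongr
    _ = c * t * rho N ε t := by ring

/-- Stuck lemma -/
lemma w_nonneg (h : Sol q C N g ε u w) (hg : Continuous g)
    (hq : 0 < q) (hC : 0 ≤ C) (hε : 0 ≤ ε) (hε1 : ε ≤ 1)
    (h1 : 0 ≤ w 1) : ∀ t ∈ Icc (0:ℝ) 1, 0 ≤ w t := by
  intro t ht
  by_contra hneg
  push Not at hneg
  have hc1 : IsCompact (Icc 0 t ∩ {r | 0 ≤ w r}) :=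
    isCompact_Icc.inter_right (isClosed_le continuous_const h.cw)
  have hc2 : IsCompact (Icc t 1 ∩ {r | 0 ≤ w r}) :=
    isCompact_Icc.inter_right (isClosed_le continuous_const h.cw)
  obtain ⟨s, ⟨⟨hs0, hst⟩, hsw⟩, hs2⟩ := hc1.exists_isGreatest
    ⟨0, ⟨le_rfl, ht.1⟩, by simp [h.w_zero]⟩
  obtain ⟨s', ⟨⟨hts', hs'1⟩, hs'w⟩, hs'2⟩ := hc2.exists_isLeast ⟨1, ⟨ht.2, le_rfl⟩, h1⟩
  simp only [mem_ofPred_eq] at hsw hs'w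
  have hst : s < t := lt_of_le_of_ne hst (by rintro rfl; linarith)
  have hts' : t < s' := lt_of_le_of_ne hts' (by rintro rfl; linarith)
  have hw : ∀ r ∈ Ioo s s', w r ≤ 0 := by
    intro r hr
    by_contra hr'
    push Not at hr'
    rcases le_total r t with hrt | hrt
    · have := hs2 ⟨⟨hs0.trans hr.1.le, hrt⟩, hr'.le⟩
      linarith [hr.1]
    · have := hs'2 ⟨⟨hrt, hr.2.le.trans hs'1⟩, hr'.le⟩
      linarith [hr.2]
  have hu : ∀ r ∈ Icc s s', u r = u s := by
    intro r hr
    refine le_antisymm ?_ (h.mono hq hC hε hε1 hs0 hr.1 (hr.2.trans hs'1))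
    have := h.u_le hq hC hε hε1 (c := 0) hs0 hr.1 (hr.2.trans hs'1) (fun x hx => by
      rw [psi_of_nonpos hC]
      exact div_nonpos_of_nonpos_of_nonneg (hw x ⟨hx.1, hx.2.trans_le hr.2⟩)
        (rho_nonneg N hε (hs0.trans hx.1.le)))
    linarith
  have a1 := h.w_le hg hε (c := g (u s)) hs0 hst.le ht.2
    (fun r hr => by rw [hu r ⟨hr.1.le, hr.2.le.trans hts'.le⟩])
  have a1' := h.w_ge hg hε (c := g (u s)) hs0 hst.le ht.2
    (fun r hr => by rw [hu r ⟨hr.1.le, hr.2.le.trans hts'.le⟩])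
  have a2 := h.w_le hg hε (c := g (u s)) ht.1 hts'.le hs'1
    (fun r hr => by rw [hu r ⟨hst.le.trans hr.1.le, hr.2.le⟩])
  have p1 := rho_int_pos N hε hs0 hst
  have p2 := rho_int_pos N hε ht.1 hts'
  rcases le_or_gt 0 (g (u s)) with hgs | hgs
  · have := mul_nonneg hgs p1.le
    linarith
  · have := mul_neg_of_neg_of_pos hgs p2
    linarith

end Sol
end aux

section aux2
open MeasureTheory intervalIntegral Topology

/-- the superlinear smallness: here `q < 1` -/
lemma small_pow {q κ c : ℝ} (hq1 : q < 1) (hκ : 0 < κ) (hc : 0 < c) :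
    ∃ m0 > 0, ∀ m, 0 < m → m < m0 → m < c * (κ * m) ^ q := by
  refine ⟨(c * κ ^ q) ^ (1 / (1 - q)), by positivity, fun m hm hlt => ?_⟩
  have h1 : 0 < 1 - q := by linarith
  have h2 : m ^ (1 - q) < c * κ ^ q := by
    have := Real.rpow_lt_rpow hm.le hlt h1
    rwa [← Real.rpow_mul (by positivity), one_div_mul_cancel h1.ne', Real.rpow_one] at this
  rw [Real.mul_rpow hκ.le hm.le]
  have h3 : m = m ^ (1 - q) * m ^ q := by
    rw [← Real.rpow_add hm]; simp
  have h4 : 0 < m ^ q := by positivity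
  calc m = m ^ (1 - q) * m ^ q := h3
    _ < (c * κ ^ q) * m ^ q := by gcongr
    _ = _ := by ring

namespace Sol
variable {q C : ℝ} {N : ℕ} {g : ℝ → ℝ} {u w : ℝ → ℝ}

lemma psi_eq (h : Sol q C N g 0 u w) (hg : Continuous g) (hq : 0 < q) (hC : 0 ≤ C)
    (hgC : ∀ s, g s ≤ C) {t : ℝ} (h0 : 0 < t) (ht : t ≤ 1) (hw : 0 ≤ w t) :
    psi q C 0 (w t / rho N 0 t) = (w t / rho N 0 t) ^ q := by
  have h1 := h.flux_le hg le_rfl hC h0 ht (fun r _ => hgC _)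
  have h2 : w t / rho N 0 t ≤ C := h1.trans (by nlinarith)
  rw [psi_zero hq, max_eq_left (div_nonneg hw (rho_pos N le_rfl h0).le), min_eq_left h2]

lemma u_ge0 (h : Sol q C N g 0 u w) (hg : Continuous g) (hq : 0 < q) (hC : 0 ≤ C)
    (hgC : ∀ s, g s ≤ C)
    {s t c : ℝ} (hc : 0 ≤ c) (hs : 0 ≤ s) (hst : s ≤ t) (ht : t ≤ 1)
    (hb : ∀ r ∈ Ioo s t, c ≤ w r) : c ^ q * (t - s) ≤ u t - u s := by
  refine h.u_ge hq hC le_rfl zero_le_one hs hst ht fun r hr => ?_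
  have hr0 : 0 < r := hs.trans_lt hr.1
  have hr1 : r ≤ 1 := hr.2.le.trans ht
  rw [h.psi_eq hg hq hC hgC hr0 hr1 (hc.trans (hb r hr))]
  refine Real.rpow_le_rpow hc ?_ hq.le
  rw [le_div_iff₀ (rho_pos N le_rfl hr0)]
  have := rho_le N 0 hr0.le hr1
  have := hb r hr
  nlinarith

lemma time_est (hg : Continuous g) (hq : 0 < q) (hq1 : q < 1) (hC : 0 ≤ C)
    (hgC : ∀ s, g s ≤ C) {z η b K : ℝ} (hη : 0 < η) (hb : 0 < b) (hK : 0 < K)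
    (hl : ∀ s, z - η ≤ s → s ≤ z → b * (z - s) ≤ g s)
    (hlK : ∀ s, z - η ≤ s → s ≤ z → g s ≤ K * (z - s))
    (hright : ∀ s, z ≤ s → s ≤ z + η → g s ≤ - (b * (s - z))) (N : ℕ) :
    ∃ δ0 > 0, ∀ δ, 0 < δ → δ ≤ δ0 → ∀ u w, Sol q C N g 0 u w → u 0 = z - δ → w 1 < 0 := by
  have pc1 := rho_int_pos N (ε := 0) le_rfl (le_refl (0:ℝ)) (by norm_num : (0:ℝ) < 1/6)
  have pc2 := rho_int_pos N (ε := 0) le_rfl (by norm_num : (0:ℝ) ≤ 2/3) (by norm_num : (2/3:ℝ) < 1)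
  set c1 := ∫ r in (0:ℝ)..(1/6), rho N 0 r
  set c2 := ∫ r in (2/3:ℝ)..1, rho N 0 r
  obtain ⟨m1, hm1, H1⟩ := small_pow hq1 (mul_pos hb pc1) (by norm_num : (0:ℝ) < 1/6)
  obtain ⟨m2, hm2, H2⟩ := small_pow hq1 (mul_pos hb pc2) (by norm_num : (0:ℝ) < 1/3)
  set μ := min η m2 with hμ
  have hμ0 : 0 < μ := lt_min hη hm2
  refine ⟨min (min η (m1 / 2)) (μ ^ (1 / q) / K), by positivity, ?_⟩
  intro δ hδ hδle u w h hu0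
  have hδη : δ ≤ η := hδle.trans ((min_le_left _ _).trans (min_le_left _ _))
  have hδm1 : δ < m1 := by
    have := hδle.trans ((min_le_left _ _).trans (min_le_right _ _))
    linarith
  have hδμ : (K * δ) ^ q ≤ μ := by
    have h1 : δ ≤ μ ^ (1 / q) / K := hδle.trans (min_le_right _ _)
    rw [le_div_iff₀ hK] at h1
    calc (K * δ) ^ q ≤ (μ ^ (1 / q)) ^ q := by
          apply Real.rpow_le_rpow (by positivity) (by linarith) hq.le
      _ = μ := by rw [← Real.rpow_mul hμ0.le, one_div_mul_cancel hq.ne', Real.rpow_one]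
  by_contra hw1
  push Not at hw1
  have hwn := h.w_nonneg hg hq hC le_rfl zero_le_one hw1
  have mono : ∀ {s t : ℝ}, 0 ≤ s → s ≤ t → t ≤ 1 → u s ≤ u t :=
    fun a b c => h.mono hq hC le_rfl zero_le_one a b c
  -- upper bound
  have key : ∀ t, 0 ≤ t → t ≤ 1 → u t ≤ z + η → u t < z + μ := by
    intro t ht0 ht1 hut
    have : u t - u 0 ≤ (K * δ) ^ q * (t - 0) := by
      refine h.u_le hq hC le_rfl zero_le_one le_rfl ht0 ht1 fun r hr => ?_
      have hr1 : r ≤ 1 := hr.2.le.trans ht1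
      rw [h.psi_eq hg hq hC hgC hr.1 hr1 (hwn r ⟨hr.1.le, hr1⟩)]
      refine Real.rpow_le_rpow (div_nonneg (hwn r ⟨hr.1.le, hr1⟩) (rho_nonneg N le_rfl hr.1.le))
        ?_ hq.le
      refine (h.flux_le hg le_rfl (c := K * δ) (by positivity) hr.1 hr1 fun x hx => ?_).trans ?_
      · have e1 : u 0 ≤ u x := mono le_rfl hx.1.le (hx.2.le.trans hr1)
        have e2 : u x ≤ u t := mono hx.1.le (hx.2.le.trans hr.2.le) ht1
        rcases le_total (u x) z with hz | hz
        · refine (hlK _ (by linarith) hz).trans ?_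
          gcongr; linarith
        · have := hright (u x) hz (by linarith)
          have : 0 ≤ b * (u x - z) := mul_nonneg hb.le (by linarith)
          have : 0 ≤ K * δ := by positivity
          linarith
      · have : 0 ≤ K * δ := by positivity
        nlinarith
    have h0 : 0 ≤ (K * δ) ^ q := by positivity
    nlinarith
  have hu1 : u 1 < z + μ := by
    by_contra hcon
    push Not at hcon
    obtain ⟨t, ht, hut⟩ := intermediate_value_Icc zero_le_one h.cu.continuousOn
      (show z + μ ∈ Icc (u 0) (u 1) from ⟨by linarith, hcon⟩)
    have := key t ht.1 ht.2 (by rw [hut, hμ]; linarith [min_le_left η m2])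
    linarith
  have hμη : μ ≤ η := min_le_left _ _
  have hμm : μ ≤ m2 := min_le_right _ _
  have hub : ∀ t, 0 ≤ t → t ≤ 1 → u t < z + μ := fun t h0 h1 => (mono h0 h1 le_rfl).trans_lt hu1
  have hlb : ∀ t, 0 ≤ t → t ≤ 1 → z - δ ≤ u t := fun t h0 h1 => hu0 ▸ mono le_rfl h0 h1
  have hgp : ∀ t, 0 ≤ t → t ≤ 1 → u t ≤ z → 0 ≤ g (u t) := by
    intro t h0 h1 hz
    refine le_trans ?_ (hl (u t) (by linarith [hlb t h0 h1]) hz)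
    exact mul_nonneg hb.le (by linarith)
  have hgn : ∀ t, 0 ≤ t → t ≤ 1 → z ≤ u t → g (u t) ≤ 0 := by
    intro t h0 h1 hz
    refine (hright (u t) hz (by linarith [hub t h0 h1])).trans ?_
    have : 0 ≤ b * (u t - z) := mul_nonneg hb.le (by linarith)
    linarith
  -- phase 1
  have ph1 : z ≤ u (1/3) := by
    by_contra hcon
    push Not at hcon
    have e1 : u (1/6) ≤ u (1/3) := mono (by norm_num) (by norm_num) (by norm_num)
    have e2 := hlb (1/6) (by norm_num) (by norm_num)
    have w1 := h.w_ge hg le_rfl (c := b * (z - u (1/6))) le_rfl (by norm_num : (0:ℝ) ≤ 1/6)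
      (by norm_num) (fun r hr => by
        have f1 : u r ≤ u (1/6) := mono hr.1.le hr.2.le (by norm_num)
        have f2 := hlb r hr.1.le (by linarith [hr.2])
        refine le_trans ?_ (hl (u r) (by linarith) (by linarith))
        gcongr)
    rw [h.w_zero, sub_zero] at w1
    have w2 : ∀ r ∈ Ioo (1/6:ℝ) (1/3), b * c1 * (z - u (1/6)) ≤ w r := by
      intro r hr
      have := h.w_ge hg le_rfl (c := 0) (by norm_num : (0:ℝ) ≤ 1/6) hr.1.le (by linarith [hr.2])
        (fun x hx => by
          have f1 : u x ≤ u (1/3) := mono (by linarith [hx.1]) (by linarith [hx.2, hr.2]) (by norm_num)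
          exact hgp x (by linarith [hx.1]) (by linarith [hx.2, hr.2]) (by linarith))
      linarith
    have w3 := h.u_ge0 hg hq hC hgC (by
      have : 0 ≤ z - u (1/6) := by linarith
      positivity) (by norm_num) (by norm_num) (by norm_num) w2
    have := H1 (z - u (1/6)) (by linarith) (by linarith)
    linarith
  -- crossing point
  obtain ⟨T, hT, huT⟩ := intermediate_value_Icc (by norm_num : (0:ℝ) ≤ 1/3) h.cu.continuousOn
      (show z ∈ Icc (u 0) (u (1/3)) from ⟨by linarith, ph1⟩)
  have hT0 : 0 < T := lt_of_le_of_ne hT.1 (by rintro rfl; linarith)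
  obtain ⟨S, hS, huS⟩ := intermediate_value_Icc hT0.le h.cu.continuousOn
      (show z - δ / 2 ∈ Icc (u 0) (u T) from ⟨by linarith, by linarith⟩)
  have hS0 : 0 < S := lt_of_le_of_ne hS.1 (by rintro rfl; linarith)
  have hT1 : T ≤ 1/3 := hT.2
  have hwS : 0 < w S := by
    have := h.w_ge hg le_rfl (c := b * (δ / 2)) le_rfl hS0.le (by linarith [hS.2])
      (fun r hr => by
        have f1 : u r ≤ u S := mono hr.1.le hr.2.le (by linarith [hS.2])
        have f2 := hlb r hr.1.le (by linarith [hr.2, hS.2])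
        refine le_trans ?_ (hl (u r) (by linarith) (by linarith))
        gcongr; linarith)
    have := mul_pos (mul_pos hb (half_pos hδ)) (rho_int_pos N (ε := 0) le_rfl le_rfl hS0)
    linarith [h.w_zero]
  have hwT : 0 < w T := by
    have := h.w_ge hg le_rfl (c := 0) hS0.le hS.2 (by linarith)
      (fun r hr => by
        have f1 : u r ≤ u T := mono (by linarith [hr.1]) hr.2.le (by linarith)
        exact hgp r (by linarith [hr.1]) (by linarith [hr.2]) (by linarith))
    linarith
  have hm' : z < u (2/3) := by
    by_contra hcon
    push Not at hcon
    have w2 : ∀ r ∈ Ioo T (2/3), w T ≤ w r := by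
      intro r hr
      have := h.w_ge hg le_rfl (c := 0) hT0.le hr.1.le (by linarith [hr.2])
        (fun x hx => by
          have f1 : u x ≤ u (2/3) := mono (by linarith [hx.1]) (by linarith [hx.2, hr.2]) (by norm_num)
          exact hgp x (by linarith [hx.1]) (by linarith [hx.2, hr.2]) (by linarith))
      linarith
    have w3 := h.u_ge0 hg hq hC hgC hwT.le hT0.le (by linarith) (by norm_num) w2
    have : 0 < w T ^ q * (2/3 - T) := mul_pos (by positivity) (by linarith)
    linarith
  have a1 := h.w_le hg le_rfl (c := -(b * (u (2/3) - z))) (by norm_num : (0:ℝ) ≤ 2/3)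
    (by norm_num) le_rfl (fun r hr' => by
      have f1 : u (2/3) ≤ u r := mono (by norm_num) hr'.1.le hr'.2.le
      have f2 := hub r (by linarith [hr'.1]) hr'.2.le
      refine (hright (u r) (by linarith) (by linarith)).trans ?_
      have : b * (u (2/3) - z) ≤ b * (u r - z) := by gcongr
      linarith)
  have a2 : ∀ r ∈ Ioo (1/3:ℝ) (2/3), b * c2 * (u (2/3) - z) ≤ w r := by
    intro r hr'
    have := h.w_le hg le_rfl (c := 0) (by linarith [hr'.1]) hr'.2.le (by norm_num)
      (fun x hx => by
        have f1 : u (1/3) ≤ u x := mono (by norm_num) (by linarith [hx.1, hr'.1])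
          (by linarith [hx.2])
        exact hgn x (by linarith [hx.1, hr'.1]) (by linarith [hx.2]) (by linarith))
    linarith
  have a3 := h.u_ge0 hg hq hC hgC (by
      have : 0 ≤ u (2/3) - z := by linarith
      positivity) (by norm_num) (by norm_num) (by norm_num) a2
  have := H2 (u (2/3) - z) (by linarith) (by linarith [hub (2/3) (by norm_num) (by norm_num)])
  linarith

end Sol
end aux2

section aux3
open MeasureTheory intervalIntegral Topology

namespace Sol
variable {q C : ℝ} {N : ℕ} {g : ℝ → ℝ}

lemma lip_u {ε : ℝ} {u w : ℝ → ℝ} (h : Sol q C N g ε u w) (hq : 0 < q) (hC : 0 ≤ C)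
    (hε : 0 ≤ ε) (hε1 : ε ≤ 1) {s t : ℝ} (hs : s ∈ Icc (0:ℝ) 1) (ht : t ∈ Icc (0:ℝ) 1) :
    |u t - u s| ≤ (C + 1) ^ q * |t - s| := by
  rw [h.u_sub hq hC hε hε1 hs ht, ← Real.norm_eq_abs]
  refine norm_integral_le_of_norm_le_const fun r _ => ?_
  rw [Real.norm_eq_abs, abs_of_nonneg (psi_nonneg hq hC hε _)]
  exact psi_le hq hC hε hε1 _

lemma rho_g_bound {ε B : ℝ} (hB : ∀ s, |g s| ≤ B)
    (hε : 0 ≤ ε) (hε1 : ε ≤ 1) (x : ℝ) {r : ℝ} (hr : r ∈ Icc (0:ℝ) 1) :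
    ‖rho N ε r * g x‖ ≤ 2 * B := by
  rw [norm_mul, Real.norm_eq_abs, Real.norm_eq_abs, abs_of_nonneg (rho_nonneg N hε hr.1)]
  have := rho_le N ε hr.1 hr.2
  exact mul_le_mul (by linarith) (hB _) (abs_nonneg _) (by norm_num)

lemma uIoc_sub {s t r : ℝ} (hs : s ∈ Icc (0:ℝ) 1) (ht : t ∈ Icc (0:ℝ) 1) (hr : r ∈ uIoc s t) :
    r ∈ Icc (0:ℝ) 1 := by
  have h2 := uIcc_subset_Icc hs ht
  exact h2 (uIoc_subset_uIcc hr)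

lemma lip_w {ε B : ℝ} {u w : ℝ → ℝ} (h : Sol q C N g ε u w) (hg : Continuous g)
    (hB : ∀ s, |g s| ≤ B)
    (hε : 0 ≤ ε) (hε1 : ε ≤ 1) {s t : ℝ} (hs : s ∈ Icc (0:ℝ) 1) (ht : t ∈ Icc (0:ℝ) 1) :
    |w t - w s| ≤ (2 * B) * |t - s| := by
  rw [h.w_sub hg hs ht, ← Real.norm_eq_abs]
  exact norm_integral_le_of_norm_le_const fun r hr =>
    rho_g_bound hB hε hε1 _ (uIoc_sub hs ht hr)

lemma limit (hg : Continuous g) (hq : 0 < q) (hC : 0 ≤ C) {B : ℝ} (hB : ∀ s, |g s| ≤ B)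
    (N : ℕ) {a z : ℝ} (ε : ℕ → ℝ) (u w : ℕ → ℝ → ℝ) (hε : ∀ n, 0 ≤ ε n) (hε1 : ∀ n, ε n ≤ 1)
    (hεt : Tendsto ε atTop (𝓝 0)) (h : ∀ n, Sol q C N g (ε n) (u n) (w n))
    (hu0 : ∀ n, u n 0 ∈ Icc a z) :
    ∃ φ : ℕ → ℕ, StrictMono φ ∧ ∃ U W, Sol q C N g 0 U W ∧ ∀ t ∈ Icc (0:ℝ) 1,
      Tendsto (fun n => u (φ n) t) atTop (𝓝 (U t)) ∧
      Tendsto (fun n => w (φ n) t) atTop (𝓝 (W t)) := by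
  have hB0 : 0 ≤ B := (abs_nonneg _).trans (hB 0)
  set L : ℝ := (C + 1) ^ q with hL
  have hL0 : 0 ≤ L := by positivity
  let F : ℕ → BoundedContinuousFunction (Icc (0:ℝ) 1) (ℝ × ℝ) := fun n =>
    BoundedContinuousFunction.mkOfCompact
      ⟨fun t => (u n t, w n t), by
        have h1 := (h n).cu
        have h2 := (h n).cw
        fun_prop⟩
  have hF : ∀ n t, F n t = (u n t, w n t) := fun n t => rfl
  have hlip : ∀ n, LipschitzWith (Real.toNNReal (L + 2 * B)) (F n) := by
    intro n
    refine LipschitzWith.of_dist_le_mul fun x y => ?_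
    rw [hF, hF, Real.coe_toNNReal _ (by positivity), Prod.dist_eq, Subtype.dist_eq]
    have e1 := (h n).lip_u hq hC (hε n) (hε1 n) y.2 x.2
    have e2 := (h n).lip_w hg hB (hε n) (hε1 n) y.2 x.2
    have := abs_nonneg ((x:ℝ) - y)
    simp only [Real.dist_eq]
    refine max_le ?_ ?_ <;> nlinarith
  have hcomp : IsCompact (closure (range F)) := by
    refine BoundedContinuousFunction.arzela_ascoli
      (Icc (a - L) (z + L) ×ˢ Icc (-(2 * B)) (2 * B)) (isCompact_Icc.prod isCompact_Icc) _ ?_ ?_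
    · rintro f x ⟨n, rfl⟩
      rw [hF]
      have e1 := (h n).lip_u hq hC (hε n) (hε1 n) (left_mem_Icc.2 zero_le_one) x.2
      have e2 := (h n).lip_w hg hB (hε n) (hε1 n) (left_mem_Icc.2 zero_le_one) x.2
      have hx : |(x:ℝ) - 0| ≤ 1 := by
        rw [sub_zero, abs_of_nonneg x.2.1]; exact x.2.2
      have e1' : |u n x - u n 0| ≤ L := e1.trans (by nlinarith)
      have e2' : |w n x - w n 0| ≤ 2 * B := e2.trans (by nlinarith)
      rw [(h n).w_zero, sub_zero] at e2'
      have := abs_le.1 e1'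
      have := abs_le.1 e2'
      have := hu0 n
      refine ⟨⟨?_, ?_⟩, ⟨?_, ?_⟩⟩ <;> simp only [mem_Icc] at * <;> linarith
    · have : UniformEquicontinuous ((↑) : range F → Icc (0:ℝ) 1 → ℝ × ℝ) := by
        refine LipschitzWith.uniformEquicontinuous _ (Real.toNNReal (L + 2 * B)) ?_
        rintro ⟨f, n, rfl⟩
        exact hlip n
      exact this.equicontinuous
  obtain ⟨f, -, φ, hφ, hlim⟩ := hcomp.tendsto_subseq (x := F)
    (fun n => subset_closure (mem_range_self n))
  have hpt : ∀ t : Icc (0:ℝ) 1, Tendsto (fun n => (u (φ n) t, w (φ n) t)) atTop (𝓝 (f t)) := by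
    intro t
    exact ((continuous_eval_const t).tendsto f).comp hlim
  let U : ℝ → ℝ := fun t => (f (projIcc 0 1 zero_le_one t)).1
  let W : ℝ → ℝ := fun t => (f (projIcc 0 1 zero_le_one t)).2
  have hU : ∀ t ∈ Icc (0:ℝ) 1, Tendsto (fun n => u (φ n) t) atTop (𝓝 (U t)) := by
    intro t ht
    have := (continuous_fst.tendsto _).comp (hpt ⟨t, ht⟩)
    simpa [U, projIcc_of_mem zero_le_one ht, Function.comp_def] using this
  have hW : ∀ t ∈ Icc (0:ℝ) 1, Tendsto (fun n => w (φ n) t) atTop (𝓝 (W t)) := by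
    intro t ht
    have := (continuous_snd.tendsto _).comp (hpt ⟨t, ht⟩)
    simpa [W, projIcc_of_mem zero_le_one ht, Function.comp_def] using this
  have cU : Continuous U := continuous_fst.comp (f.continuous.comp continuous_projIcc)
  have cW : Continuous W := continuous_snd.comp (f.continuous.comp continuous_projIcc)
  have hεφ : Tendsto (fun n => ε (φ n)) atTop (𝓝 0) := hεt.comp hφ.tendsto_atTop
  have hrho : ∀ r, Tendsto (fun n => rho N (ε (φ n)) r) atTop (𝓝 (rho N 0 r)) := by
    intro r
    exact tendsto_const_nhds.add hεφ
  refine ⟨φ, hφ, U, W, ⟨cU, cW, ?_, ?_⟩, fun t ht => ⟨hU t ht, hW t ht⟩⟩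
  · intro t ht
    have l1 := hU t ht
    have l0 := hU 0 (by simp)
    have l2 : Tendsto (fun n => ∫ r in (0:ℝ)..t, psi q C (ε (φ n)) (w (φ n) r / rho N (ε (φ n)) r))
        atTop (𝓝 (∫ r in (0:ℝ)..t, psi q C 0 (W r / rho N 0 r))) := by
      refine intervalIntegral.tendsto_integral_filter_of_dominated_convergence (fun _ => L) ?_ ?_
        intervalIntegrable_const ?_
      · refine Eventually.of_forall fun n => ?_
        exact ((h (φ n)).int_psi hq hC (hε _) (hε1 _) 0 t).def'.aestronglyMeasurable
      · refine Eventually.of_forall fun n => Eventually.of_forall fun r _ => ?_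
        rw [Real.norm_eq_abs, abs_of_nonneg (psi_nonneg hq hC (hε _) _)]
        exact psi_le hq hC (hε _) (hε1 _) _
      · refine Eventually.of_forall fun r hr => ?_
        have hr1 := uIoc_sub (by simp) ht hr
        rw [uIoc_of_le ht.1] at hr
        have : Tendsto (fun n => (ε (φ n), w (φ n) r / rho N (ε (φ n)) r)) atTop
            (𝓝 (0, W r / rho N 0 r)) :=
          hεφ.prodMk_nhds ((hW r hr1).div (hrho r) (rho_pos N le_rfl hr.1).ne')
        exact ((psi_cont hq C).tendsto _).comp this
    have l3 := l0.add l2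
    refine tendsto_nhds_unique l1 (l3.congr fun n => ?_)
    exact ((h (φ n)).hu t ht).symm
  · intro t ht
    have l1 := hW t ht
    have l2 : Tendsto (fun n => ∫ r in (0:ℝ)..t, rho N (ε (φ n)) r * g (u (φ n) r))
        atTop (𝓝 (∫ r in (0:ℝ)..t, rho N 0 r * g (U r))) := by
      refine intervalIntegral.tendsto_integral_filter_of_dominated_convergence (fun _ => 2 * B) ?_ ?_
        intervalIntegrable_const ?_
      · refine Eventually.of_forall fun n => ?_
        exact ((h (φ n)).int_w hg 0 t).def'.aestronglyMeasurable
      · refine Eventually.of_forall fun n => Eventually.of_forall fun r hr => ?_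
        exact rho_g_bound hB (hε _) (hε1 _) _ (uIoc_sub (by simp) ht hr)
      · refine Eventually.of_forall fun r hr => ?_
        have hr1 := uIoc_sub (by simp) ht hr
        exact (hrho r).mul ((hg.tendsto _).comp (hU r hr1))
    refine tendsto_nhds_unique l1 (l2.congr fun n => ?_)
    exact ((h (φ n)).hw t ht).symm

end Sol
end aux3

section aux4
open MeasureTheory intervalIntegral Topology
open scoped NNReal

lemma psi_lip {q C ε : ℝ} (hq : 0 < q) (hq1 : q < 1) (hC : 0 ≤ C) (hε : 0 < ε) (y y' : ℝ) :
    |psi q C ε y - psi q C ε y'| ≤ q * ε ^ (q - 1) * |y - y'| := by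
  have h1 : ∀ x ∈ Ici ε, HasDerivWithinAt (fun x : ℝ => x ^ q) (q * x ^ (q - 1)) (Ici ε) x := by
    intro x hx
    exact (Real.hasDerivAt_rpow_const (Or.inl (hε.trans_le hx).ne')).hasDerivWithinAt
  have h2 : ∀ x ∈ Ici ε, ‖q * x ^ (q - 1)‖ ≤ q * ε ^ (q - 1) := by
    intro x hx
    have hx0 : 0 < x := hε.trans_le hx
    rw [Real.norm_eq_abs, abs_of_nonneg (by positivity)]
    exact mul_le_mul_of_nonneg_left
      (Real.rpow_le_rpow_of_nonpos hε hx (by linarith)) hq.le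
  have mem : ∀ y, min (max y 0) C + ε ∈ Ici ε := fun y => by
    have : 0 ≤ min (max y 0) C := le_min (le_max_right _ _) hC
    simp only [mem_Ici]; linarith
  have h3 := (convex_Ici ε).norm_image_sub_le_of_norm_hasDerivWithin_le h1 h2 (mem y') (mem y)
  have h4 : |min (max y 0) C - min (max y' 0) C| ≤ |y - y'| := by
    have := ((LipschitzWith.id (α := ℝ)).max_const 0).min_const C
    simpa [Real.dist_eq] using this.dist_le_mul y y'
  simp only [Real.norm_eq_abs] at h3
  unfold psi
  calc _ = |(min (max y 0) C + ε) ^ q - (min (max y' 0) C + ε) ^ q| := by congr 1; ring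
    _ ≤ _ := h3
    _ = q * ε ^ (q - 1) * |min (max y 0) C - min (max y' 0) C| := by congr 2; ring
    _ ≤ _ := by gcongr

lemma exists_flow {q C B ε : ℝ} {g : ℝ → ℝ} {K : ℝ≥0} (N : ℕ) (hg : LipschitzWith K g)
    (hB : ∀ s, |g s| ≤ B) (hq : 0 < q) (hq1 : q < 1) (hC : 0 ≤ C) (hε : 0 < ε) (hε1 : ε ≤ 1)
    {a z : ℝ} (haz : a ≤ z) (hga : g a = 0) :
    ∃ u w : ℝ → ℝ → ℝ, (∀ d ∈ Icc a z, Sol q C N g ε (u d) (w d) ∧ u d 0 = d) ∧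
      ContinuousOn (fun d => u d 1) (Icc a z) ∧ ContinuousOn (fun d => w d 1) (Icc a z) ∧
      u a 1 = a := by
  have hB0 : 0 ≤ B := (abs_nonneg _).trans (hB 0)
  let v : ℝ → ℝ × ℝ → ℝ × ℝ := fun t x => (psi q C ε (x.2 / rho N ε t), rho N ε t * g x.1)
  have hρ : ∀ t ∈ Icc (0:ℝ) 1, ε ≤ rho N ε t ∧ rho N ε t ≤ 2 := by
    intro t ht
    refine ⟨?_, ?_⟩
    · have : 0 ≤ t ^ (N - 1) := pow_nonneg ht.1 _
      unfold rho; linarith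
    · have := rho_le N ε ht.1 ht.2; linarith
  have hgc := hg.continuous
  have hpc : Continuous (fun y => psi q C ε y) :=
      (psi_cont hq C).comp (by fun_prop : Continuous fun y : ℝ => (ε, y))
  set L : ℝ := (C + 1) ^ q + 2 * B with hL
  have hL0 : 0 ≤ L := by positivity
  set K' : ℝ := q * ε ^ (q - 1) * (1 / ε) + 2 * K with hK'
  have hK'0 : 0 ≤ K' := by positivity
  have vlip : ∀ t ∈ Icc (0:ℝ) 1, LipschitzWith K'.toNNReal (v t) := by
    intro t ht
    obtain ⟨r1, r2⟩ := hρ t ht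
    refine LipschitzWith.of_dist_le_mul fun x y => ?_
    rw [Real.coe_toNNReal _ hK'0, Prod.dist_eq]
    have d1 : |x.1 - y.1| ≤ dist x y := by rw [Prod.dist_eq]; exact le_max_left _ _
    have d2 : |x.2 - y.2| ≤ dist x y := by rw [Prod.dist_eq]; exact le_max_right _ _
    have hd := dist_nonneg (x := x) (y := y)
    have hrp : 0 < rho N ε t := hε.trans_le r1
    have A0 : 0 ≤ q * ε ^ (q - 1) * (1 / ε) := by positivity
    refine max_le ?_ ?_
    · simp only [v, Real.dist_eq]
      calc _ ≤ q * ε ^ (q - 1) * |x.2 / rho N ε t - y.2 / rho N ε t| :=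
            psi_lip hq hq1 hC hε _ _
        _ = q * ε ^ (q - 1) * (|x.2 - y.2| * (1 / rho N ε t)) := by
            rw [← sub_div, abs_div, abs_of_pos (hε.trans_le r1)]; ring
        _ ≤ q * ε ^ (q - 1) * (dist x y * (1 / ε)) := by gcongr
        _ = q * ε ^ (q - 1) * (1 / ε) * dist x y := by ring
        _ ≤ K' * dist x y := by
            have : (0:ℝ) ≤ 2 * K := by positivity
            gcongr; linarith
    · simp only [v, Real.dist_eq]
      have := hg.dist_le_mul x.1 y.1
      rw [Real.dist_eq, Real.dist_eq] at this
      rw [← mul_sub, abs_mul, abs_of_pos (hε.trans_le r1)]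
      calc _ ≤ 2 * (K * dist x y) := by
            apply mul_le_mul r2 (this.trans (by gcongr)) (abs_nonneg _) (by norm_num)
        _ = (2 * K) * dist x y := by ring
        _ ≤ _ := by gcongr; linarith
  have hcont : ∀ (x : ℝ → ℝ × ℝ), ContinuousOn x (Icc 0 1) →
      ContinuousOn (fun t => v t (x t)) (Icc 0 1) := by
    intro x hx
    have x1 : ContinuousOn (fun t => (x t).1) (Icc 0 1) := continuous_fst.comp_continuousOn hx
    have x2 : ContinuousOn (fun t => (x t).2) (Icc 0 1) := continuous_snd.comp_continuousOn hx
    refine ContinuousOn.prodMk ?_ ?_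
    · refine hpc.comp_continuousOn (x2.div (rho_cont N ε).continuousOn ?_)
      intro t ht
      exact (hε.trans_le (hρ t ht).1).ne'
    · exact (rho_cont N ε).continuousOn.mul (hgc.comp_continuousOn x1)
  set R : ℝ := (z - a) / 2 with hR
  have hR0 : 0 ≤ R := by rw [hR]; linarith
  have hPL : IsPicardLindelof v (tmin := 0) (tmax := 1) ⟨0, by simp⟩ (((a + z) / 2, 0) : ℝ × ℝ)
      (L + R).toNNReal R.toNNReal L.toNNReal K'.toNNReal := by
    refine ⟨fun t ht => (vlip t ht).lipschitzOnWith, fun x _ => hcont (fun _ => x)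
      continuousOn_const, fun t ht x _ => ?_, ?_⟩
    · rw [Real.coe_toNNReal _ hL0, Prod.norm_def]
      have : 0 ≤ (C + 1) ^ q := by positivity
      refine max_le ?_ ?_
      · simp only [v]
        rw [Real.norm_eq_abs, abs_of_nonneg (psi_nonneg hq hC hε.le _)]
        exact (psi_le hq hC hε.le hε1 _).trans (by linarith)
      · exact (Sol.rho_g_bound hB hε.le hε1 _ ht).trans (by linarith)
    · rw [Real.coe_toNNReal _ hL0, Real.coe_toNNReal _ hR0, Real.coe_toNNReal _ (by positivity)]
      simp
  obtain ⟨α, hα, L', hα'⟩ := hPL.exists_forall_mem_closedBall_eq_hasDerivWithinAt_lipschitzOnWith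
  have hmem : ∀ d ∈ Icc a z, ((d, 0) : ℝ × ℝ) ∈
      Metric.closedBall (((a + z) / 2, 0) : ℝ × ℝ) (R.toNNReal : ℝ) := by
    intro d hd
    rw [Real.coe_toNNReal _ hR0, Metric.mem_closedBall, Prod.dist_eq]
    simp only [Real.dist_eq, sub_self, abs_zero]
    refine max_le ?_ hR0
    rw [abs_le, hR]
    constructor <;> linarith [hd.1, hd.2]
  let pr : ℝ → ℝ := fun t => (projIcc (0:ℝ) 1 zero_le_one t : ℝ)
  have cpr : Continuous pr := continuous_subtype_val.comp continuous_projIcc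
  have hpr : ∀ t ∈ Icc (0:ℝ) 1, pr t = t := fun t ht => by simp [pr, projIcc_of_mem zero_le_one ht]
  have mpr : ∀ t, pr t ∈ Icc (0:ℝ) 1 := fun t => (projIcc (0:ℝ) 1 zero_le_one t).2
  have cα : ∀ d ∈ Icc a z, ContinuousOn (α (d, 0)) (Icc 0 1) := fun d hd t ht =>
    ((hα _ (hmem d hd)).2 t ht).continuousWithinAt
  have hint : ∀ d ∈ Icc a z, ∀ t ∈ Icc (0:ℝ) 1,
      ((∫ r in (0:ℝ)..t, (v r (α (d, 0) r)).1) = (α (d, 0) t).1 - d) ∧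
      ((∫ r in (0:ℝ)..t, (v r (α (d, 0) r)).2) = (α (d, 0) t).2) := by
    intro d hd t ht
    have c0 : α (d, 0) 0 = (d, 0) := (hα _ (hmem d hd)).1
    have cv := hcont _ (cα d hd)
    have sub : Icc 0 t ⊆ Icc (0:ℝ) 1 := Icc_subset_Icc_right ht.2
    have dd : ∀ x ∈ Ioo 0 t, HasDerivAt (α (d, 0)) (v x (α (d, 0) x)) x := fun x hx =>
      ((hα _ (hmem d hd)).2 x (sub (Ioo_subset_Icc_self hx))).hasDerivAt
        (Icc_mem_nhds hx.1 (hx.2.trans_le ht.2))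
    constructor
    · rw [integral_eq_sub_of_hasDerivAt_of_le ht.1 (f := fun t => (α (d, 0) t).1)
        (continuous_fst.comp_continuousOn ((cα d hd).mono sub)) (fun x hx => (dd x hx).fst) ?_, c0]
      refine ContinuousOn.intervalIntegrable_of_Icc ht.1 ?_
      exact continuous_fst.comp_continuousOn (cv.mono sub)
    · rw [integral_eq_sub_of_hasDerivAt_of_le ht.1 (f := fun t => (α (d, 0) t).2)
        (continuous_snd.comp_continuousOn ((cα d hd).mono sub)) (fun x hx => (dd x hx).snd) ?_, c0]
      · simp
      refine ContinuousOn.intervalIntegrable_of_Icc ht.1 ?_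
      exact continuous_snd.comp_continuousOn (cv.mono sub)
  have clip : ContinuousOn (fun d : ℝ => α (d, 0) 1) (Icc a z) :=
    ((hα' 1 (by simp)).continuousOn).comp (f := fun d : ℝ => ((d, 0) : ℝ × ℝ))
      (by fun_prop) (fun d hd => hmem d hd)
  have h01 : (0:ℝ) ∈ Icc (0:ℝ) 1 := by simp
  have h11 : (1:ℝ) ∈ Icc (0:ℝ) 1 := by simp
  refine ⟨fun d t => (α (d, 0) (pr t)).1, fun d t => (α (d, 0) (pr t)).2, fun d hd => ⟨?_, ?_⟩,
    ?_, ?_, ?_⟩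
  · have cc : Continuous (fun t => α (d, 0) (pr t)) :=
      (cα d hd).comp_continuous cpr mpr
    have c0 : α (d, 0) 0 = (d, 0) := (hα _ (hmem d hd)).1
    refine ⟨continuous_fst.comp cc, continuous_snd.comp cc, fun t ht => ?_, fun t ht => ?_⟩
    · have e := (hint d hd t ht).1
      simp only [hpr t ht, hpr 0 h01, c0]
      rw [integral_congr (g := fun r => (v r (α (d, 0) r)).1), e]
      · ring
      · intro r hr
        rw [uIcc_of_le ht.1] at hr
        simp only [hpr r ⟨hr.1, hr.2.trans ht.2⟩, v]
    · have e := (hint d hd t ht).2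
      simp only [hpr t ht]
      rw [integral_congr (g := fun r => (v r (α (d, 0) r)).2), e]
      intro r hr
      rw [uIcc_of_le ht.1] at hr
      simp only [hpr r ⟨hr.1, hr.2.trans ht.2⟩, v]
  · have c0 : α (d, 0) 0 = (d, 0) := (hα _ (hmem d hd)).1
    simp only [hpr 0 h01, c0]
  · simp only [hpr 1 h11]
    exact continuous_fst.comp_continuousOn clip
  · simp only [hpr 1 h11]
    exact continuous_snd.comp_continuousOn clip
  · have ha : a ∈ Icc a z := ⟨le_rfl, haz⟩
    have c0 : α (a, 0) 0 = (a, 0) := (hα _ (hmem a ha)).1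
    have := ODE_solution_unique_of_mem_Icc_right (v := v) (s := fun _ => univ) (a := 0) (b := 1)
      (f := α (a, 0)) (g := fun _ => (a, 0)) (K := K'.toNNReal)
      (fun t ht => (vlip t (Ico_subset_Icc_self ht)).lipschitzOnWith) (cα a ha)
      (fun t ht => ((hα _ (hmem a ha)).2 t (Ico_subset_Icc_self ht)).mono_of_mem_nhdsWithin
        (Icc_mem_nhdsGE_of_mem ht))
      (fun _ _ => mem_univ _) continuousOn_const
      (fun t _ => by
        have : v t (a, 0) = 0 := by
          simp only [v, hga, zero_div, mul_zero]
          rw [psi_of_nonpos hC le_rfl]; rfl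
        rw [this]; exact hasDerivWithinAt_const _ _ _)
      (fun _ _ => mem_univ _) c0
    simp only [hpr 1 h11]
    rw [this h11]

end aux4

section aux5
open MeasureTheory intervalIntegral Topology
open scoped NNReal

lemma Sol.w_one_pos {q C : ℝ} {N : ℕ} {g : ℝ → ℝ} {ε : ℝ} {u w : ℝ → ℝ}
    (h : Sol q C N g ε u w) (hg : Continuous g) (hq : 0 < q) (hC : 0 ≤ C) (hε : 0 ≤ ε)
    (hε1 : ε ≤ 1) {a z : ℝ} (hpos : ∀ s ∈ Ioo a z, 0 < g s) (h0 : a < u 0) (h1 : u 1 < z) :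
    0 < w 1 := by
  have h01 := h.mono hq hC hε hε1 le_rfl zero_le_one le_rfl
  obtain ⟨x, hx, hmin⟩ := isCompact_Icc.exists_isMinOn (nonempty_Icc.2 h01) hg.continuousOn
  have hgx : 0 < g x := hpos x ⟨h0.trans_le hx.1, hx.2.trans_lt h1⟩
  have := h.w_ge hg hε (c := g x) le_rfl zero_le_one le_rfl (fun r hr => by
    exact hmin ⟨h.mono hq hC hε hε1 le_rfl hr.1.le hr.2.le,
      h.mono hq hC hε hε1 hr.1.le hr.2.le le_rfl⟩)
  have := mul_pos hgx (rho_int_pos N hε le_rfl (zero_lt_one (α := ℝ)))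
  linarith [h.w_zero]

lemma core {q C B : ℝ} {g : ℝ → ℝ} {K : ℝ≥0} (N : ℕ) (hg : LipschitzWith K g)
    (hB : ∀ s, |g s| ≤ B) (hq : 0 < q) (hq1 : q < 1) (hC : 0 ≤ C) (hgC : ∀ s, g s ≤ C)
    {a z η b k : ℝ} (haz : a < z) (hga : g a = 0) (hpos : ∀ s ∈ Ioo a z, 0 < g s)
    (hη : 0 < η) (hb : 0 < b) (hk : 0 < k)
    (hl : ∀ s, z - η ≤ s → s ≤ z → b * (z - s) ≤ g s)
    (hlK : ∀ s, z - η ≤ s → s ≤ z → g s ≤ k * (z - s))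
    (hright : ∀ s, z ≤ s → s ≤ z + η → g s ≤ - (b * (s - z))) :
    ∃ u w, Sol q C N g 0 u w ∧ w 1 = 0 ∧ a ≤ u 0 ∧ u 0 < z ∧ z ≤ u 1 := by
  have hgc := hg.continuous
  obtain ⟨δ0, hδ0, H⟩ := Sol.time_est hgc hq hq1 hC hgC hη hb hk hl hlK hright N
  set δ := min δ0 ((z - a) / 2) with hδd
  have hδ : 0 < δ := lt_min hδ0 (by linarith)
  have hδa : δ ≤ (z - a) / 2 := min_le_right _ _
  let e : ℕ → ℝ := fun n => 1 / ((n:ℝ) + 1)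
  have he : Tendsto e atTop (𝓝 0) := tendsto_one_div_add_atTop_nhds_zero_nat
  have he0 : ∀ n, 0 < e n := fun n => by simp only [e]; positivity
  have he1 : ∀ n, e n ≤ 1 := fun n => by
    simp only [e]
    rw [div_le_one (by positivity)]
    have : (0:ℝ) ≤ n := Nat.cast_nonneg n
    linarith
  have claim : ∃ n0, ∀ n ≥ n0, ∀ u w, Sol q C N g (e n) u w → u 0 = z - δ → w 1 < 0 := by
    by_contra hcon
    push Not at hcon
    choose ν hν u w hs hu0 hw1 using hcon
    have hνt : Tendsto ν atTop atTop := tendsto_atTop_mono hν tendsto_id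
    obtain ⟨φ, hφ, U, W, hSol, hlim⟩ := Sol.limit hgc hq hC hB N (a := z - δ) (z := z - δ)
      (fun n => e (ν n)) u w
      (fun n => (he0 _).le) (fun n => he1 _) (he.comp hνt) hs (fun n => by rw [hu0]; simp)
    have hU0 : U 0 = z - δ := by
      refine tendsto_nhds_unique (hlim 0 (by simp)).1 ?_
      simp only [hu0]
      exact tendsto_const_nhds
    have hW1 : 0 ≤ W 1 := ge_of_tendsto' (hlim 1 (by simp)).2 (fun n => hw1 _)
    have := H δ hδ (min_le_left _ _) U W hSol hU0
    linarith
  obtain ⟨n0, hn0⟩ := claim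
  have step : ∀ n : ℕ, ∃ u w, Sol q C N g (e (n0 + n)) u w ∧ w 1 = 0 ∧ u 0 ∈ Icc a (z - δ) ∧
      z ≤ u 1 := by
    intro n
    have hle : a < z - δ := by linarith
    obtain ⟨u, w, hs, cu, cw, hua⟩ := exists_flow N hg hB hq hq1 hC (he0 (n0 + n)) (he1 _)
      hle.le hga
    have hev : ∀ᶠ d in 𝓝[>] a, u d 1 < z := by
      have h1 : Tendsto (fun d => u d 1) (𝓝[Icc a (z - δ)] a) (𝓝 (u a 1)) :=
        cu a ⟨le_rfl, hle.le⟩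
      have h2 : 𝓝[>] a ≤ 𝓝[Icc a (z - δ)] a := by
        rw [← nhdsWithin_Ioo_eq_nhdsGT hle]
        exact nhdsWithin_mono _ Ioo_subset_Icc_self
      have h3 := h1.mono_left h2
      rw [hua] at h3
      exact h3.eventually (gt_mem_nhds haz)
    obtain ⟨d1, hd1, hd1'⟩ := (hev.and (Ioo_mem_nhdsGT hle)).exists
    have hd1m : d1 ∈ Icc a (z - δ) := Ioo_subset_Icc_self hd1'
    have w1 : 0 < w d1 1 := (hs d1 hd1m).1.w_one_pos hgc hq hC (he0 _).le (he1 _) hpos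
      (by rw [(hs d1 hd1m).2]; exact hd1'.1) hd1
    have w2 : w (z - δ) 1 < 0 := by
      have hm : z - δ ∈ Icc a (z - δ) := ⟨hle.le, le_rfl⟩
      exact hn0 _ (Nat.le_add_right _ _) _ _ (hs _ hm).1 (hs _ hm).2
    obtain ⟨d, hd, hwd⟩ := intermediate_value_Icc' hd1'.2.le
      (cw.mono (Icc_subset_Icc_left hd1'.1.le)) (show (0:ℝ) ∈ Icc _ _ from ⟨w2.le, w1.le⟩)
    have hdm : d ∈ Icc a (z - δ) := ⟨hd1'.1.le.trans hd.1, hd.2⟩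
    simp only at hwd
    refine ⟨u d, w d, (hs d hdm).1, hwd, by rwa [(hs d hdm).2], ?_⟩
    by_contra hcon
    push Not at hcon
    have := (hs d hdm).1.w_one_pos hgc hq hC (he0 _).le (he1 _) hpos
      (by rw [(hs d hdm).2]; exact hd1'.1.trans_le hd.1) hcon
    linarith
  choose u w hs hw1 hu0 hu1 using step
  obtain ⟨φ, hφ, U, W, hSol, hlim⟩ := Sol.limit hgc hq hC hB N (a := a) (z := z - δ)
      (fun n => e (n0 + n)) u w
      (fun n => (he0 _).le) (fun n => he1 _)
      (he.comp (tendsto_atTop_mono (fun n => Nat.le_add_left n n0) tendsto_id)) hs hu0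
  refine ⟨U, W, hSol, ?_, ?_, ?_, ?_⟩
  · refine tendsto_nhds_unique (hlim 1 (by simp)).2 ?_
    simp only [hw1]
    exact tendsto_const_nhds
  · exact ge_of_tendsto' (hlim 0 (by simp)).1 (fun n => (hu0 _).1)
  · have := le_of_tendsto' (hlim 0 (by simp)).1 (fun n => (hu0 _).2)
    linarith
  · exact ge_of_tendsto' (hlim 1 (by simp)).1 (fun n => hu1 _)

/-- from the integral formulation to the classical one -/
lemma Sol.classical {p C : ℝ} {N : ℕ} {f g : ℝ → ℝ} {u w : ℝ → ℝ} (hp : 2 < p)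
    (h : Sol (1 / (p - 1)) C N g 0 u w) (hg : Continuous g) (hC : 0 ≤ C) (hgC : ∀ s, g s ≤ C)
    (hw1 : w 1 = 0) (hfg : ∀ r ∈ Icc (0:ℝ) 1, g (u r) = (u r) ^ (p - 1) - f (u r)) :
    IsRadialNeumannSolution p N f u (fun r => psi (1 / (p - 1)) C 0 (w r / rho N 0 r)) := by
  set q := 1 / (p - 1) with hqd
  have hq : 0 < q := by rw [hqd]; apply one_div_pos.2; linarith
  have hwn := h.w_nonneg hg hq hC le_rfl zero_le_one hw1.ge
  have hpc : Continuous (fun y => psi q C 0 y) :=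
      (psi_cont hq C).comp (by fun_prop : Continuous fun y : ℝ => ((0:ℝ), y))
  have hcd : ContinuousOn (fun r => w r / rho N 0 r) (Icc 0 1) := by
    intro t ht
    rcases ht.1.eq_or_lt with h0 | h0
    · subst h0
      have e0 : w 0 / rho N 0 0 = 0 := by rw [h.w_zero, zero_div]
      have : Tendsto (fun r => w r / rho N 0 r) (𝓝[Icc 0 1] 0) (𝓝 0) := by
        have hlin : Tendsto (fun r : ℝ => C * r) (𝓝[Icc 0 1] 0) (𝓝 0) := by
          have : Continuous (fun r : ℝ => C * r) := by fun_prop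
          simpa using (this.tendsto 0).mono_left nhdsWithin_le_nhds
        refine tendsto_of_tendsto_of_tendsto_of_le_of_le' tendsto_const_nhds hlin ?_ ?_
        · filter_upwards [self_mem_nhdsWithin] with r hr
          exact div_nonneg (hwn r hr) (rho_nonneg N le_rfl hr.1)
        · filter_upwards [self_mem_nhdsWithin] with r hr
          rcases hr.1.eq_or_lt with h0 | h0
          · subst h0; rw [e0]; simp
          · exact h.flux_le hg le_rfl hC h0 hr.2 (fun _ _ => hgC _)
      show Tendsto (fun r => w r / rho N 0 r) (𝓝[Icc 0 1] 0) (𝓝 (w 0 / rho N 0 0))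
      rw [e0]; exact this
    · exact (h.cw.continuousAt.div (rho_cont N 0).continuousAt
        (rho_pos N le_rfl h0).ne').continuousWithinAt
  have hcont : ContinuousOn (fun r => psi q C 0 (w r / rho N 0 r)) (Icc 0 1) :=
    hpc.comp_continuousOn hcd
  refine ⟨?_, hcont, ?_, ?_, ?_⟩
  · intro r hr
    let v : ℝ → ℝ := IccExtend (zero_le_one (α := ℝ))
      ((Icc (0:ℝ) 1).domRestrict (fun r => psi q C 0 (w r / rho N 0 r)))
    have cv : Continuous v := (continuousOn_iff_continuous_domRestrict.1 hcont).Icc_extend'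
    have hv : ∀ t ∈ Icc (0:ℝ) 1, v t = psi q C 0 (w t / rho N 0 t) := fun t ht => by
      simp only [v]; rw [IccExtend_of_mem _ _ ht]; rfl
    have hd : HasDerivAt (fun t => u 0 + ∫ x in (0:ℝ)..t, v x) (v r) r :=
      (cv.integral_hasStrictDerivAt 0 r).hasDerivAt.const_add _
    have hd' := hd.hasDerivWithinAt (s := Icc (0:ℝ) 1)
    rw [hv r hr] at hd'
    have heq : ∀ t ∈ Icc (0:ℝ) 1, u t = u 0 + ∫ x in (0:ℝ)..t, v x := by
      intro t ht
      rw [h.hu t ht]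
      congr 1
      apply integral_congr
      intro x hx
      rw [uIcc_of_le ht.1] at hx
      exact (hv x ⟨hx.1, hx.2.trans ht.2⟩).symm
    exact hd'.congr heq (heq r hr)
  · simp only [h.w_zero, zero_div]
    exact psi_of_nonpos hC le_rfl
  · simp only [hw1, zero_div]
    exact psi_of_nonpos hC le_rfl
  · intro r hr
    have hmem : Ioo (0:ℝ) 1 ∈ 𝓝 r := Ioo_mem_nhds hr.1 hr.2
    have hw : HasDerivAt w (rho N 0 r * g (u r)) r := by
      have cc : Continuous (fun r => rho N 0 r * g (u r)) := (rho_cont N 0).mul (hg.comp h.cu)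
      refine (cc.integral_hasStrictDerivAt 0 r).hasDerivAt.congr_of_eventuallyEq ?_
      filter_upwards [hmem] with t ht
      exact h.hw t (Ioo_subset_Icc_self ht)
    rw [hfg r (Ioo_subset_Icc_self hr)] at hw
    have e1 : ∀ t, rho N 0 t = t ^ (N - 1) := fun t => by simp [rho]
    rw [e1] at hw
    refine hw.congr_of_eventuallyEq ?_
    filter_upwards [hmem] with t ht
    unfold flux
    beta_reduce
    have hwt := hwn t (Ioo_subset_Icc_self ht)
    rw [h.psi_eq hg hq hC hgC ht.1 ht.2.le hwt]
    have hρ := rho_pos N (ε := 0) le_rfl ht.1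
    have hy : 0 ≤ w t / rho N 0 t := div_nonneg hwt hρ.le
    have hyq : 0 ≤ (w t / rho N 0 t) ^ q := by positivity
    rw [abs_of_nonneg hyq]
    have : ((w t / rho N 0 t) ^ q) ^ (p - 2) * (w t / rho N 0 t) ^ q = w t / rho N 0 t := by
      rw [← Real.rpow_add_one' hyq (by linarith), ← Real.rpow_mul hy]
      have : q * (p - 2 + 1) = 1 := by
        rw [hqd]; field_simp [show p - 1 ≠ 0 by linarith]; ring
      rw [this, Real.rpow_one]
    rw [this, ← e1]
    field_simp

end aux5

section aux6
open MeasureTheory intervalIntegral Topology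
open scoped NNReal

/-- positivity by the strong maximum principle -/
lemma Sol.start_pos {p C : ℝ} {N : ℕ} {g : ℝ → ℝ} {u w : ℝ → ℝ} (hp : 2 < p)
    (h : Sol (1 / (p - 1)) C N g 0 u w) (hg : Continuous g) (hC : 0 ≤ C) (hgC : ∀ s, g s ≤ C)
    (hw1 : w 1 = 0) (h0 : 0 ≤ u 0) (hfg : ∀ r ∈ Icc (0:ℝ) 1, g (u r) ≤ (u r) ^ (p - 1))
    (h1 : 0 < u 1) : 0 < u 0 := by
  set q := 1 / (p - 1) with hqd
  have hq : 0 < q := by rw [hqd]; apply one_div_pos.2; linarith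
  have hwn := h.w_nonneg hg hq hC le_rfl zero_le_one hw1.ge
  have key : ∀ s t : ℝ, 0 ≤ s → s ≤ t → t ≤ 1 → u t - u s ≤ u t * (t - s) := by
    intro s t hs hst ht
    refine h.u_le hq hC le_rfl zero_le_one hs hst ht ?_
    intro r hr
    have hr0 : 0 < r := hs.trans_lt hr.1
    have hr1 : r ≤ 1 := hr.2.le.trans ht
    have hut : 0 ≤ u t := h0.trans (h.mono hq hC le_rfl zero_le_one le_rfl (hs.trans hst) ht)
    have hc : 0 ≤ (u t) ^ (p - 1) := Real.rpow_nonneg hut _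
    rw [h.psi_eq hg hq hC hgC hr0 hr1 (hwn r ⟨hr0.le, hr1⟩)]
    have h2 : w r / rho N 0 r ≤ (u t) ^ (p - 1) * r := by
      refine h.flux_le hg le_rfl hc hr0 hr1 ?_
      intro x hx
      refine (hfg x ⟨hx.1.le, hx.2.le.trans hr1⟩).trans ?_
      refine Real.rpow_le_rpow ?_ ?_ (by linarith)
      · exact h0.trans (h.mono hq hC le_rfl zero_le_one le_rfl hx.1.le (hx.2.le.trans hr1))
      · exact h.mono hq hC le_rfl zero_le_one hx.1.le (hx.2.le.trans hr.2.le) ht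
    have h3 : w r / rho N 0 r ≤ (u t) ^ (p - 1) := h2.trans (mul_le_of_le_one_right hc hr1)
    have hy : 0 ≤ w r / rho N 0 r := div_nonneg (hwn r ⟨hr0.le, hr1⟩) (rho_nonneg N le_rfl hr0.le)
    refine (Real.rpow_le_rpow hy h3 hq.le).trans ?_
    rw [← Real.rpow_mul hut, hqd, mul_one_div_cancel (by linarith), Real.rpow_one]
  have k1 := key 0 (1/2) le_rfl (by norm_num) (by norm_num)
  have k2 := key (1/2) 1 (by norm_num) (by norm_num) le_rfl
  linarith

end aux6

theorem stmt_0 (p : ℝ) (hp : 2 < p) (N : ℕ) (hN : 1 ≤ N) (f f' : ℝ → ℝ)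
    (hC1 : ∀ s ∈ Ici (0:ℝ), HasDerivWithinAt f (f' s) (Ici 0) s)
    (hC1' : ContinuousOn f' (Ici 0))
    (hf0 : ∀ s ∈ Ici (0:ℝ), 0 ≤ f s ∧ 0 ≤ f' s)
    (hf1 : ∃ L ∈ Ico (0:ℝ) 1,
      Tendsto (fun s => f s / s ^ (p - 1)) (nhdsWithin 0 (Ioi 0)) (nhds L))
    (hf2 : ∃ a : ℝ, 1 < a ∧ ∀ᶠ s in atTop, a ≤ f s / s ^ (p - 1))
    (hf3 : ∃ u₀ : ℝ, 0 < u₀ ∧ f u₀ = u₀ ^ (p - 1) ∧ (p - 1) * u₀ ^ (p - 2) < f' u₀) :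
    ∃ u u' : ℝ → ℝ,
      IsRadialNeumannSolution p N f u u' ∧
      (∀ r ∈ Icc (0:ℝ) 1, 0 < u r) ∧
      MonotoneOn u (Icc (0:ℝ) 1) ∧
      ¬ (∀ r ∈ Icc (0:ℝ) 1, u r = u 0) := by
  obtain ⟨z, hz, hfz, hfz'⟩ := hf3
  have hq : 0 < 1 / (p - 1) := one_div_pos.2 (by linarith)
  have hq1 : 1 / (p - 1) < 1 := by rw [div_lt_one (by linarith)]; linarith
  have hfc : ContinuousOn f (Ici 0) := fun s hs => (hC1 s hs).continuousWithinAt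
  have hrp : Continuous (fun s : ℝ => s ^ (p - 1)) := Real.continuous_rpow_const (by linarith)
  have hrp2 : Continuous (fun s : ℝ => s ^ (p - 2)) := Real.continuous_rpow_const (by linarith)
  -- f 0 = 0
  have hf00 : f 0 = 0 := by
    obtain ⟨L, hL, hT⟩ := hf1
    have t1 : Tendsto f (nhdsWithin 0 (Ioi 0)) (nhds (f 0)) :=
      (hfc 0 self_mem_Ici).mono_left (nhdsWithin_mono _ Ioi_subset_Ici_self)
    have t2 : Tendsto (fun s : ℝ => s ^ (p - 1)) (nhdsWithin 0 (Ioi 0)) (nhds 0) := by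
      have := (hrp.tendsto 0).mono_left (nhdsWithin_le_nhds (s := Ioi (0:ℝ)))
      rwa [Real.zero_rpow (by linarith)] at this
    have t3 := hT.mul t2
    rw [mul_zero] at t3
    refine tendsto_nhds_unique t1 (t3.congr' ?_)
    filter_upwards [self_mem_nhdsWithin] with s hs
    exact div_mul_cancel₀ _ (Real.rpow_pos_of_pos hs _).ne'
  let g0 : ℝ → ℝ := fun s => s ^ (p - 1) - f s
  have g0c : ContinuousOn g0 (Ici 0) := hrp.continuousOn.sub hfc
  have g00 : g0 0 = 0 := by simp only [g0]; rw [hf00, Real.zero_rpow (by linarith), sub_zero]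
  have g0z : g0 z = 0 := by simp only [g0]; rw [hfz, sub_self]
  have g0d : ∀ s ∈ Ici (0:ℝ), HasDerivWithinAt g0 ((p - 1) * s ^ (p - 2) - f' s) (Ici 0) s := by
    intro s hs
    have h1 := (Real.hasDerivAt_rpow_const (x := s) (p := p - 1)
      (Or.inr (by linarith))).hasDerivWithinAt (s := Ici (0:ℝ))
    rw [show p - 1 - 1 = p - 2 by ring] at h1
    exact h1.sub (hC1 s hs)
  -- eventual negativity
  obtain ⟨S0, hS0z, hS0⟩ : ∃ S0, z + 1 ≤ S0 ∧ ∀ s, S0 ≤ s → g0 s ≤ 0 := by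
    obtain ⟨a, ha, hev⟩ := hf2
    obtain ⟨S, hS⟩ := eventually_atTop.1 hev
    refine ⟨max S (z + 1), le_max_right _ _, fun s hs => ?_⟩
    have h1 := hS s ((le_max_left _ _).trans hs)
    have hs0 : 0 < s := by have := (le_max_right S (z + 1)).trans hs; linarith
    have h2 := Real.rpow_pos_of_pos hs0 (p - 1)
    rw [le_div_iff₀ h2] at h1
    simp only [g0]
    nlinarith
  obtain ⟨C0, hC0⟩ := (isCompact_Icc (a := (0:ℝ)) (b := S0)).bddAbove_image
    (g0c.mono Icc_subset_Ici_self)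
  have hC0' : ∀ s ∈ Icc (0:ℝ) S0, g0 s ≤ C0 := fun s hs => hC0 (mem_image_of_mem _ hs)
  obtain ⟨C, hC, hgC0⟩ : ∃ C, 0 ≤ C ∧ ∀ s, 0 ≤ s → g0 s ≤ C := by
    refine ⟨max C0 0, le_max_right _ _, fun s hs => ?_⟩
    rcases le_total s S0 with h | h
    · exact (hC0' s ⟨hs, h⟩).trans (le_max_left _ _)
    · exact (hS0 s h).trans (le_max_right _ _)
  obtain ⟨M, hM1, hM2⟩ : ∃ M, z + 1 ≤ M ∧ z + (C + 1) ^ (1 / (p - 1)) ≤ M :=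
    ⟨max (z + 1) (z + (C + 1) ^ (1 / (p - 1))), le_max_left _ _, le_max_right _ _⟩
  have hM0 : 0 ≤ M := by linarith
  let g : ℝ → ℝ := fun s => g0 (max 0 (min s M))
  have hcl : ∀ s, max 0 (min s M) ∈ Icc (0:ℝ) M := fun s =>
    ⟨le_max_left _ _, max_le hM0 (min_le_right _ _)⟩
  have hge : ∀ s ∈ Icc (0:ℝ) M, g s = g0 s := by
    intro s hs
    simp only [g]
    rw [min_eq_left hs.2, max_eq_right hs.1]
  have hgC : ∀ s, g s ≤ C := fun s => hgC0 _ (hcl s).1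
  obtain ⟨K, hK⟩ : ∃ K, LipschitzWith K g := by
    have hdc : ContinuousOn (fun s => (p - 1) * s ^ (p - 2) - f' s) (Ici 0) :=
      (hrp2.const_mul _ |>.continuousOn).sub hC1'
    obtain ⟨D, hD⟩ := (isCompact_Icc (a := (0:ℝ)) (b := M)).exists_bound_of_continuousOn
      (hdc.mono Icc_subset_Ici_self)
    have hD0 : 0 ≤ D := (norm_nonneg _).trans (hD 0 ⟨le_rfl, hM0⟩)
    have hlip : LipschitzOnWith ⟨D, hD0⟩ g0 (Icc 0 M) := by
      refine (convex_Icc (0:ℝ) M).lipschitzOnWith_of_nnnorm_hasDerivWithin_le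
        (fun s hs => (g0d s hs.1).mono Icc_subset_Ici_self) ?_
      intro s hs
      exact hD s hs
    refine ⟨⟨D, hD0⟩, LipschitzWith.of_dist_le_mul fun x y => ?_⟩
    refine (hlip.dist_le_mul _ (hcl x) _ (hcl y)).trans ?_
    refine mul_le_mul_of_nonneg_left ?_ hD0
    rw [Real.dist_eq, Real.dist_eq]
    refine (abs_max_sub_max_le_max _ _ _ _).trans ?_
    rw [sub_self, abs_zero, max_eq_right (abs_nonneg _)]
    refine (abs_min_sub_min_le_max _ _ _ _).trans ?_
    rw [sub_self, abs_zero, max_eq_left (abs_nonneg _)]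
  have hgc := hK.continuous
  obtain ⟨B, hB⟩ : ∃ B, ∀ s, |g s| ≤ B := by
    obtain ⟨D, hD⟩ := (isCompact_Icc (a := (0:ℝ)) (b := M)).exists_bound_of_continuousOn
      (g0c.mono Icc_subset_Ici_self)
    exact ⟨D, fun s => hD _ (hcl s)⟩
  -- local behaviour near z
  obtain ⟨β, hβ, hgd⟩ : ∃ β, 0 < β ∧ HasDerivAt g0 (-β) z := by
    refine ⟨f' z - (p - 1) * z ^ (p - 2), by linarith, ?_⟩
    have := (g0d z hz.le).hasDerivAt (Ici_mem_nhds hz)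
    rwa [neg_sub]
  obtain ⟨η, hη, hηz, hη1, hloc⟩ : ∃ η, 0 < η ∧ η ≤ z / 2 ∧ η ≤ 1 ∧
      ∀ s, |s - z| ≤ η → |g0 s + β * (s - z)| ≤ β / 2 * |s - z| := by
    have h1 := (hasDerivAt_iff_isLittleO.1 hgd).bound (c := β / 2) (by linarith)
    obtain ⟨δ, hδ, hδ'⟩ := Metric.eventually_nhds_iff.1 h1
    refine ⟨min (δ / 2) (min (z / 2) 1), by positivity, ?_, ?_, ?_⟩
    · exact (min_le_right _ _).trans (min_le_left _ _)
    · exact (min_le_right _ _).trans (min_le_right _ _)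
    · intro s hs
      have h2 := hs.trans (min_le_left _ _)
      have h3 := hδ' (y := s) (by rw [Real.dist_eq]; linarith)
      rw [Real.norm_eq_abs, Real.norm_eq_abs, g0z, smul_eq_mul] at h3
      convert h3 using 2
      ring
  have hl : ∀ s, z - η ≤ s → s ≤ z → β / 2 * (z - s) ≤ g s ∧ g s ≤ 2 * β * (z - s) := by
    intro s h1 h2
    rw [hge s ⟨by linarith, by linarith⟩]
    have e : |s - z| = z - s := by rw [abs_of_nonpos (by linarith)]; ring
    have h3 := hloc s (by rw [e]; linarith)
    rw [e, abs_le] at h3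
    have : 0 ≤ β * (z - s) := mul_nonneg hβ.le (by linarith)
    constructor <;> linarith [h3.1, h3.2]
  have hr : ∀ s, z ≤ s → s ≤ z + η → g s ≤ -(β / 2 * (s - z)) := by
    intro s h1 h2
    rw [hge s ⟨by linarith, by linarith⟩]
    have e : |s - z| = s - z := abs_of_nonneg (by linarith)
    have h3 := hloc s (by rw [e]; linarith)
    rw [e, abs_le] at h3
    linarith [h3.1, h3.2]
  -- the lower zero
  obtain ⟨a, ha0, haz, hga, hpos⟩ : ∃ a, 0 ≤ a ∧ a < z ∧ g a = 0 ∧ ∀ s ∈ Ioo a z, 0 < g s := by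
    have hcomp : IsCompact (Icc 0 (z - η) ∩ {s | g s ≤ 0}) :=
      isCompact_Icc.inter_right (isClosed_le hgc continuous_const)
    have hne : (Icc 0 (z - η) ∩ {s | g s ≤ 0}).Nonempty :=
      ⟨0, ⟨le_rfl, by linarith⟩, by
        show g 0 ≤ 0
        rw [hge 0 ⟨le_rfl, hM0⟩, g00]⟩
    obtain ⟨a, ⟨haI, hag⟩, hamax⟩ := hcomp.exists_isGreatest hne
    have hag' : g a ≤ 0 := hag
    have hzη : 0 < g (z - η) := by
      have := (hl (z - η) le_rfl (by linarith)).1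
      have h5 : 0 < β / 2 * η := by positivity
      rw [show z - (z - η) = η by ring] at this
      linarith
    have hpos : ∀ s ∈ Ioo a z, 0 < g s := by
      intro s hs
      rcases le_total s (z - η) with h | h
      · by_contra hcon
        have := hamax ⟨⟨haI.1.trans hs.1.le, h⟩, not_lt.1 hcon⟩
        linarith [hs.1]
      · have := (hl s h hs.2.le).1
        have h5 : 0 < β / 2 * (z - s) := mul_pos (by linarith) (by linarith [hs.2])
        linarith
    have haz : a < z := by linarith [haI.2]
    refine ⟨a, haI.1, haz, le_antisymm hag' ?_, hpos⟩
    have ht : Tendsto g (nhdsWithin a (Ioi a)) (nhds (g a)) :=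
      (hgc.tendsto a).mono_left nhdsWithin_le_nhds
    refine ge_of_tendsto ht ?_
    filter_upwards [Ioo_mem_nhdsGT haz] with s hs
    exact (hpos s hs).le
  obtain ⟨u, w, h, hw1, hua, huz, hu1⟩ := core N hK hB hq hq1 hC hgC haz hga hpos hη
    (b := β / 2) (k := 2 * β) (by positivity) (by positivity)
    (fun s h1 h2 => (hl s h1 h2).1) (fun s h1 h2 => (hl s h1 h2).2) hr
  have hmono : ∀ s t : ℝ, 0 ≤ s → s ≤ t → t ≤ 1 → u s ≤ u t := fun s t hs hst ht =>
    h.mono hq hC le_rfl zero_le_one hs hst ht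
  have hrange : ∀ r ∈ Icc (0:ℝ) 1, u r ∈ Icc 0 M := by
    intro r hr
    refine ⟨(ha0.trans hua).trans (hmono 0 r le_rfl hr.1 hr.2), ?_⟩
    have h1 := h.u_le hq hC le_rfl zero_le_one le_rfl hr.1 hr.2
      (c := (C + 1) ^ (1 / (p - 1))) (fun x _ => psi_le hq hC le_rfl zero_le_one _)
    have h2 : 0 ≤ (C + 1) ^ (1 / (p - 1)) := Real.rpow_nonneg (by linarith) _
    have h3 : (C + 1) ^ (1 / (p - 1)) * (r - 0) ≤ (C + 1) ^ (1 / (p - 1)) :=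
      mul_le_of_le_one_right h2 (by linarith [hr.2])
    linarith
  have hfg : ∀ r ∈ Icc (0:ℝ) 1, g (u r) = (u r) ^ (p - 1) - f (u r) := fun r hr =>
    hge _ (hrange r hr)
  have hu0 : 0 < u 0 := by
    refine h.start_pos hp hgc hC hgC hw1 (ha0.trans hua) (fun r hr => ?_) (by linarith)
    rw [hfg r hr]
    linarith [(hf0 (u r) (hrange r hr).1).1]
  refine ⟨u, _, h.classical hp hgc hC hgC hw1 hfg, ?_, ?_, ?_⟩
  · intro r hr
    exact hu0.trans_le (hmono 0 r le_rfl hr.1 hr.2)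
  · intro s hs t ht hst
    exact hmono s t hs.1 hst ht.2
  · intro hcon
    have := hcon 1 ⟨zero_le_one, le_rfl⟩
    linarith
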